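/- arXiv:1511.01752 — 5 statements merged into one kernel-verified Lean document; each statement's English description precedes it below -/
import Mathlib

section
/- Let X₁,…,Xₙ be independent random variables with values in a measurable space E, let V : E → [1,∞) be measurable with E[V(X_k)²] < ∞ for each k, and let f : Eⁿ → ℝ satisfy the Lipschitz-type condition with constants L_k. Then for every λ ∈ ℝ, E[ exp( λ(f(X₁,…,Xₙ) − E[f(X₁,…,Xₙ)]) − (λ²/2) Σ_{k=1}^n L_k² ( E[V(X_k)²] + V(X_k)² ) ) ] ≤ 1. -/
open MeasureTheory ProbabilityTheory Real ENNReal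

lemma aux_exp (h : ℝ) : Real.exp (h - h ^ 2 / 2) ≤ 1 + h + h ^ 2 / 2 := by
  have h1 : 1 - h + h ^ 2 / 2 ≤ Real.exp (-(h - h ^ 2 / 2)) := by
    have := Real.add_one_le_exp (-(h - h ^ 2 / 2)); linarith
  have h2 : Real.exp (h - h ^ 2 / 2) * Real.exp (-(h - h ^ 2 / 2)) = 1 := by
    rw [← Real.exp_add]; simp
  have hp := Real.exp_pos (h - h ^ 2 / 2)
  have h3 : 0 < 1 - h + h ^ 2 / 2 := by nlinarith [sq_nonneg (h - 1)]
  have h4 : Real.exp (h - h ^ 2 / 2) * (1 - h + h ^ 2 / 2) ≤ 1 := by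
    exact (mul_le_mul_of_nonneg_left h1 hp.le).trans h2.le
  have h5 : 1 ≤ (1 + h + h ^ 2 / 2) * (1 - h + h ^ 2 / 2) := by
    nlinarith [sq_nonneg (h ^ 2)]
  exact le_of_mul_le_mul_right (h4.trans h5) h3

lemma aux_center {E : Type*} [Nonempty E] (g W : E → ℝ)
    (h : ∀ x y, |g x - g y| ≤ W x + W y) : ∃ c, ∀ x, |g x - c| ≤ W x := by
  have hb : ∀ x y, g x - W x ≤ g y + W y := fun x y => by
    have := (abs_le.1 (h x y)).2; linarith
  refine ⟨⨆ x, (g x - W x), fun x => ?_⟩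
  have hbdd : BddAbove (Set.range fun x => g x - W x) :=
    ⟨g x + W x, by rintro _ ⟨y, rfl⟩; exact hb y x⟩
  have h1 := le_ciSup hbdd x
  have h2 : (⨆ x, (g x - W x)) ≤ g x + W x := ciSup_le fun y => hb y x
  rw [abs_le]; constructor <;> linarith

lemma aux_V {E : Type*} [MeasurableSpace E] (ν : Measure E) [IsProbabilityMeasure ν]
    (V : E → ℝ) (hV : Measurable V) (hV2 : Integrable (fun x => V x ^ 2) ν) :
    Integrable V ν :=
  ((memLp_two_iff_integrable_sq hV.aestronglyMeasurable).2 hV2).integrable (by norm_num)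

lemma aux_g {E : Type*} [MeasurableSpace E] (ν : Measure E) [IsProbabilityMeasure ν]
    (V : E → ℝ) (hV : Measurable V) (hV2 : Integrable (fun x => V x ^ 2) ν)
    (g : E → ℝ) (hg : Measurable g) (L : ℝ) (h : ∀ x y, |g x - g y| ≤ L * (V x + V y)) :
    Integrable g ν := by
  have hne : Nonempty E := nonempty_of_isProbabilityMeasure ν
  obtain ⟨c, hc⟩ := aux_center g (fun x => L * V x) (fun x y => by
    have := h x y; linarith)
  have h1 : Integrable (fun x => g x - c) ν :=
    Integrable.mono' ((aux_V ν V hV hV2).const_mul L)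
      (hg.sub_const c).aestronglyMeasurable (Filter.Eventually.of_forall hc)
  have h2 := h1.add (integrable_const c)
  refine h2.congr (Filter.Eventually.of_forall fun x => ?_)
  simp

lemma aux_step {E : Type*} [MeasurableSpace E] (ν : Measure E) [IsProbabilityMeasure ν]
    (V : E → ℝ) (hV : Measurable V) (hV2 : Integrable (fun x => V x ^ 2) ν)
    (g : E → ℝ) (hg : Measurable g) (L : ℝ) (h : ∀ x y, |g x - g y| ≤ L * (V x + V y))
    (lam : ℝ) :
    ∫⁻ x, ENNReal.ofReal (Real.exp (lam * (g x - ∫ y, g y ∂ν)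
      - lam ^ 2 / 2 * (L ^ 2 * ((∫ y, V y ^ 2 ∂ν) + V x ^ 2)))) ∂ν ≤ 1 := by
  have hne : Nonempty E := nonempty_of_isProbabilityMeasure ν
  have hgi := aux_g ν V hV hV2 g hg L h
  obtain ⟨c, hc⟩ := aux_center g (fun x => L * V x) (fun x y => by
    have := h x y; linarith)
  set m := ∫ y, g y ∂ν with hm
  set s := ∫ y, V y ^ 2 ∂ν with hs
  set K := Real.exp (-(lam * (m - c) + lam ^ 2 / 2 * L ^ 2 * s)) with hK
  have hpt : ∀ x, Real.exp (lam * (g x - m) - lam ^ 2 / 2 * (L ^ 2 * (s + V x ^ 2)))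
      ≤ (1 + lam * (g x - c) + lam ^ 2 / 2 * L ^ 2 * V x ^ 2) * K := by
    intro x
    have hsq : (g x - c) ^ 2 ≤ (L * V x) ^ 2 := by
      have := hc x
      exact sq_le_sq' (by have := (abs_le.1 this).1; linarith) (abs_le.1 this).2
    have hsq2 : (lam * (g x - c)) ^ 2 ≤ lam ^ 2 * L ^ 2 * V x ^ 2 := by
      nlinarith [mul_le_mul_of_nonneg_left hsq (sq_nonneg lam)]
    calc _ ≤ Real.exp ((lam * (g x - c)) - (lam * (g x - c)) ^ 2 / 2) * K := by
            rw [hK, ← Real.exp_add]; apply Real.exp_le_exp.2; nlinarith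
      _ ≤ _ := by
            apply mul_le_mul_of_nonneg_right _ (Real.exp_pos _).le
            have := aux_exp (lam * (g x - c)); linarith
  have hi0 : Integrable (fun x => lam * (g x - c)) ν :=
    (hgi.sub (integrable_const c)).const_mul lam
  have hi1 : Integrable (fun x => 1 + lam * (g x - c)) ν :=
    (integrable_const 1).add ((hgi.sub (integrable_const c)).const_mul lam)
  have hi2 : Integrable (fun x => lam ^ 2 / 2 * L ^ 2 * V x ^ 2) ν := hV2.const_mul _
  have hint : Integrable (fun x =>
      (1 + lam * (g x - c) + lam ^ 2 / 2 * L ^ 2 * V x ^ 2) * K) ν :=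
    (hi1.add hi2).mul_const K
  have hval : ∫ x, (1 + lam * (g x - c) + lam ^ 2 / 2 * L ^ 2 * V x ^ 2) * K ∂ν
      = (1 + lam * (m - c) + lam ^ 2 / 2 * L ^ 2 * s) * K := by
    rw [integral_mul_const, integral_add hi1 hi2, integral_add (integrable_const 1)
      hi0, integral_const_mul, integral_const_mul,
      integral_sub hgi (integrable_const c)]
    simp [hm, hs]
  calc _ ≤ ∫⁻ x, ENNReal.ofReal
        ((1 + lam * (g x - c) + lam ^ 2 / 2 * L ^ 2 * V x ^ 2) * K) ∂ν :=
        lintegral_mono fun x => ENNReal.ofReal_le_ofReal (hpt x)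
    _ = ENNReal.ofReal ((1 + lam * (m - c) + lam ^ 2 / 2 * L ^ 2 * s) * K) := by
        rw [← hval, ofReal_integral_eq_lintegral_ofReal hint]
        exact Filter.Eventually.of_forall fun x => (Real.exp_pos _).le.trans (hpt x)
    _ ≤ 1 := by
        rw [ENNReal.ofReal_le_one]
        have := Real.add_one_le_exp (lam * (m - c) + lam ^ 2 / 2 * L ^ 2 * s)
        calc _ ≤ Real.exp (lam * (m - c) + lam ^ 2 / 2 * L ^ 2 * s) * K :=
              mul_le_mul_of_nonneg_right (by linarith) (Real.exp_pos _).le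
          _ = 1 := by rw [hK, ← Real.exp_add]; simp

lemma aux_mp {E : Type*} [MeasurableSpace E] (n : ℕ) (ν : Fin (n + 1) → Measure E)
    [∀ k, IsProbabilityMeasure (ν k)] :
    MeasurePreserving (fun p : E × (Fin n → E) => (Fin.cons p.1 p.2 : Fin (n + 1) → E))
      ((ν 0).prod (Measure.pi fun j : Fin n => ν j.succ)) (Measure.pi ν) := by
  have := (measurePreserving_piFinSuccAbove ν 0).symm
  have e1 : (fun p : E × (Fin n → E) => (Fin.cons p.1 p.2 : Fin (n + 1) → E))
      = (MeasurableEquiv.piFinSuccAbove (fun _ => E) 0).symm := by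
    funext p
    simp [MeasurableEquiv.piFinSuccAbove, Fin.insertNthEquiv]
  rw [e1]
  simpa only [Fin.succAbove_zero] using this

lemma aux_main {E : Type*} [MeasurableSpace E] (V : E → ℝ) (hV : Measurable V) (lam : ℝ) :
    ∀ (n : ℕ) (ν : Fin n → Measure E) [∀ k, IsProbabilityMeasure (ν k)]
    (_ : ∀ k, Integrable (fun x => V x ^ 2) (ν k))
    (f : (Fin n → E) → ℝ) (_ : Measurable f) (L : Fin n → ℝ)
    (_ : ∀ (u : Fin n → E) (k : Fin n) (y : E),
      |f u - f (Function.update u k y)| ≤ L k * (V (u k) + V y)),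
    Integrable f (Measure.pi ν) ∧
    ∫⁻ u, ENNReal.ofReal (Real.exp (lam * (f u - ∫ v, f v ∂(Measure.pi ν))
      - lam ^ 2 / 2 * ∑ k : Fin n,
          (L k) ^ 2 * ((∫ x, V x ^ 2 ∂(ν k)) + V (u k) ^ 2))) ∂(Measure.pi ν) ≤ 1 := by
  intro n
  induction n with
  | zero =>
    intro ν _ hV2 f hf L hlip
    have hc : f = fun _ => f default := by
      funext u; exact congrArg f (Subsingleton.elim _ _)
    rw [hc]
    refine ⟨integrable_const _, ?_⟩
    simp
  | succ n ih =>
    intro ν _ hV2 f hf L hlip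
    have mp := aux_mp n ν
    have hne : Nonempty E := nonempty_of_isProbabilityMeasure (ν 0)
    obtain ⟨x0⟩ := hne
    set P := Measure.pi fun j : Fin n => ν j.succ with hP
    have hlip0 : ∀ r : Fin n → E, ∀ x y, |f (Fin.cons x r) - f (Fin.cons y r)|
        ≤ L 0 * (V x + V y) := by
      intro r x y
      have := hlip (Fin.cons x r) 0 y
      simpa using this
    have hlipS : ∀ x, ∀ (r : Fin n → E) (k : Fin n) (y : E),
        |f (Fin.cons x r) - f (Fin.cons x (Function.update r k y))|
          ≤ L k.succ * (V (r k) + V y) := by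
      intro x r k y
      have := hlip (Fin.cons x r) k.succ y
      rwa [← Fin.cons_update, Fin.cons_succ] at this
    have hfm : Measurable (fun p : E × (Fin n → E) => f (Fin.cons p.1 p.2)) :=
      hf.comp mp.measurable
    have hfx : ∀ x, Measurable (fun r : Fin n → E => f (Fin.cons x r)) := fun x =>
      hfm.comp measurable_prodMk_left
    have hfr : ∀ r : Fin n → E, Measurable (fun x => f (Fin.cons x r)) := fun r =>
      hfm.comp measurable_prodMk_right
    have hV1 := aux_V (ν 0) V hV (hV2 0)
    have hx0 := (ih (fun j => ν j.succ) (fun k => hV2 _) (fun r => f (Fin.cons x0 r))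
      (hfx x0) (fun j => L j.succ) (hlipS x0)).1
    have hfi : Integrable (fun p : E × (Fin n → E) => f (Fin.cons p.1 p.2)) ((ν 0).prod P) := by
      have hA : Integrable (fun p : E × (Fin n → E) => |f (Fin.cons x0 p.2)|
          + L 0 * (V p.1 + V x0)) ((ν 0).prod P) :=
        (hx0.abs.comp_snd (ν 0)).add
          (((hV1.add (integrable_const (V x0))).const_mul (L 0)).comp_fst P)
      refine hA.mono' hfm.aestronglyMeasurable (Filter.Eventually.of_forall fun p => ?_)
      have h1 := hlip0 p.2 p.1 x0
      have h2 := abs_sub_abs_le_abs_sub (f (Fin.cons p.1 p.2)) (f (Fin.cons x0 p.2))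
      rw [Real.norm_eq_abs]; linarith
    have hfI : Integrable f (Measure.pi ν) := by
      rw [← mp.map_eq]
      exact (integrable_map_measure hf.aestronglyMeasurable mp.measurable.aemeasurable).2 hfi
    refine ⟨hfI, ?_⟩
    set G : (Fin n → E) → ℝ := fun r => ∫ x, f (Fin.cons x r) ∂(ν 0) with hG
    have hgi : ∀ r : Fin n → E, Integrable (fun x => f (Fin.cons x r)) (ν 0) := fun r =>
      aux_g (ν 0) V hV (hV2 0) _ (hfr r) (L 0) (hlip0 r)
    have hGm : Measurable G :=
      (hfm.stronglyMeasurable.integral_prod_left').measurable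
    have hGlip : ∀ (r : Fin n → E) (k : Fin n) (y : E),
        |G r - G (Function.update r k y)| ≤ L k.succ * (V (r k) + V y) := by
      intro r k y
      rw [hG]
      simp only
      rw [← integral_sub (hgi _) (hgi _), ← Real.norm_eq_abs]
      have := norm_integral_le_of_norm_le_const (μ := ν 0)
        (f := fun x => f (Fin.cons x r) - f (Fin.cons x (Function.update r k y)))
        (Filter.Eventually.of_forall fun x => hlipS x r k y)
      simpa using this
    have hmean : ∫ v, f v ∂(Measure.pi ν) = ∫ r, G r ∂P := by
      rw [← mp.map_eq, integral_map mp.measurable.aemeasurable hf.aestronglyMeasurable]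
      exact integral_prod_symm _ hfi
    have hI := (ih (fun j => ν j.succ) (fun k => hV2 _) G hGm (fun j => L j.succ) hGlip).2
    rw [hmean]
    set M := ∫ r, G r ∂P with hM
    have hmeas : Measurable (fun u : Fin (n + 1) → E =>
        ENNReal.ofReal (Real.exp (lam * (f u - M)
      - lam ^ 2 / 2 * ∑ k : Fin (n + 1),
          (L k) ^ 2 * ((∫ x, V x ^ 2 ∂(ν k)) + V (u k) ^ 2)))) := by
      fun_prop
    rw [← mp.lintegral_comp hmeas]
    refine (lintegral_prod_symm _ (hmeas.comp mp.measurable).aemeasurable).trans_le ?_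
    refine le_trans (lintegral_mono fun r => ?_) hI
    have hstep := aux_step (ν 0) V hV (hV2 0) _ (hfr r) (L 0) (hlip0 r) lam
    set B := Real.exp (lam * (G r - M) - lam ^ 2 / 2 * ∑ k : Fin n,
          (L k.succ) ^ 2 * ((∫ x, V x ^ 2 ∂(ν k.succ)) + V (r k) ^ 2)) with hB
    calc _ = ∫⁻ x, ENNReal.ofReal (Real.exp (lam * (f (Fin.cons x r) - G r)
      - lam ^ 2 / 2 * (L 0 ^ 2 * ((∫ y, V y ^ 2 ∂(ν 0)) + V x ^ 2)))) * ENNReal.ofReal B ∂(ν 0) := by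
          refine lintegral_congr fun x => ?_
          rw [← ENNReal.ofReal_mul (Real.exp_pos _).le, hB, ← Real.exp_add]
          simp only [Function.comp_apply]
          congr 2
          rw [Fin.sum_univ_succ]
          simp only [Fin.cons_zero, Fin.cons_succ]
          ring
      _ = _ := lintegral_mul_const' _ _ ENNReal.ofReal_ne_top
      _ ≤ 1 * ENNReal.ofReal B := mul_le_mul_left hstep _
      _ = ENNReal.ofReal B := one_mul _



/-- Independent-variable specialization of the paper's main inequality (Remark 1),
extending McDiarmid's inequality: if `X 1, …, X n` are independent, `V : E → [1,∞)`
with `E[V(X k)²] < ∞`, and `f` satisfies the Lipschitz-type condition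
`|f(u) − f(update u k y)| ≤ L k (V (u k) + V y)`, then for every `λ ∈ ℝ`,
`E[exp(λ(f(X) − E[f(X)]) − (λ²/2) Σ_k L_k² (E[V(X k)²] + V(X k)²))] ≤ 1`. -/
theorem exponential_inequality_independent
    {E : Type*} [MeasurableSpace E]
    {Ω : Type*} [MeasurableSpace Ω] (μ : Measure Ω) [IsProbabilityMeasure μ]
    (n : ℕ) (X : Fin n → Ω → E) (hXmeas : ∀ k, Measurable (X k))
    (hindep : ProbabilityTheory.iIndepFun X μ)
    (V : E → ℝ) (hVmeas : Measurable V) (hV1 : ∀ x, 1 ≤ V x)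
    (hV2 : ∀ k, Integrable (fun ω => (V (X k ω)) ^ 2) μ)
    (f : (Fin n → E) → ℝ) (hf : Measurable f)
    (L : Fin n → ℝ) (hL : ∀ k, 0 < L k)
    (hlip : ∀ (u : Fin n → E) (k : Fin n) (y : E),
      |f u - f (Function.update u k y)| ≤ L k * (V (u k) + V y))
    (lam : ℝ) :
    ∫⁻ ω, ENNReal.ofReal (Real.exp (lam *
        (f (fun k => X k ω) - ∫ ω', f (fun k => X k ω') ∂μ)
      - lam ^ 2 / 2 * ∑ k : Fin n,
          (L k) ^ 2 * ((∫ ω', (V (X k ω')) ^ 2 ∂μ) + (V (X k ω)) ^ 2))) ∂μ ≤ 1 := by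
  have hp : ∀ k, IsProbabilityMeasure (μ.map (X k)) := fun k =>
    Measure.isProbabilityMeasure_map (hXmeas k).aemeasurable
  have hmap := (iIndepFun_iff_map_fun_eq_pi_map (fun k => (hXmeas k).aemeasurable)).1 hindep
  have hXm : Measurable (fun ω k => X k ω) := measurable_pi_lambda _ hXmeas
  have hVs : Measurable (fun x => V x ^ 2) := hVmeas.pow_const 2
  have hs : ∀ k, ∫ x, V x ^ 2 ∂(μ.map (X k)) = ∫ ω', (V (X k ω')) ^ 2 ∂μ := fun k =>
    integral_map (hXmeas k).aemeasurable hVs.aestronglyMeasurable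
  have key := (aux_main V hVmeas lam n (fun k => μ.map (X k))
    (fun k => (integrable_map_measure hVs.aestronglyMeasurable (hXmeas k).aemeasurable).2 (hV2 k))
    f hf L hlip).2
  rw [← hmap, integral_map hXm.aemeasurable hf.aestronglyMeasurable,
    lintegral_map (by fun_prop) hXm] at key
  simpa only [hs] using key
end

section
/- Let (W_k)_{k≥0} be a Markov chain with kernel Q̄ on a measurable space F and let V̄ : F → [2,∞) be measurable with Q̄V̄(w) ≤ βV̄(w) + 2b for all w ∈ F, where 0 < β < 1 and b > 0. Fix R ≥ 1 with β̄ := β + 2b/(1+R) < 1, let C ⊂ F be a measurable set such that V̄ ≤ 2R on C and V̄ > 1 + R on the complement of C, and let τ⁺ := inf{ k ≥ 1 : W_k ∈ C }. Then sup_{w ∈ C} E_w[ Σ_{k=1}^{τ⁺} V̄(W_k) ] ≤ 2β̄(R − 1)/(1 − β̄). -/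
open MeasureTheory ProbabilityTheory Real ENNReal
open scoped Classical

/-- `(W k)` is a time-homogeneous Markov chain on `Ω` with transition kernel `Q`. -/
def IsMarkovChain {F : Type*} [MeasurableSpace F] {Ω : Type*} [MeasurableSpace Ω]
    (μ : Measure Ω) (Q : Kernel F F) (W : ℕ → Ω → F) : Prop :=
  (∀ k, Measurable (W k)) ∧
  ∀ (k : ℕ) (g : F → ℝ), Measurable g → (∀ y, |g y| ≤ 1) →
    ∀ (h : (Fin (k + 1) → F) → ℝ), Measurable h → (∀ v, |h v| ≤ 1) →
      ∫ ω, g (W (k + 1) ω) * h (fun i => W i ω) ∂μ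
        = ∫ ω, (∫ y, g y ∂(Q (W k ω))) * h (fun i => W i ω) ∂μ

open scoped ENNReal

theorem markov_lintegral_aux {F : Type*} [MeasurableSpace F] {Ω : Type*} [MeasurableSpace Ω]
    (μ : Measure Ω) [IsProbabilityMeasure μ] (Q : Kernel F F) [IsMarkovKernel Q] (W : ℕ → Ω → F)
    (hchain : IsMarkovChain μ Q W) (k : ℕ) (B : Set (Fin (k + 1) → F)) (hB : MeasurableSet B)
    (f : F → ℝ≥0∞) (hf : Measurable f) :
    ∫⁻ ω in {ω | (fun i : Fin (k + 1) => W i ω) ∈ B}, f (W (k + 1) ω) ∂μ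
      = ∫⁻ ω in {ω | (fun i : Fin (k + 1) => W i ω) ∈ B}, ∫⁻ v, f v ∂(Q (W k ω)) ∂μ := by
  obtain ⟨hW, hM⟩ := hchain
  set A : Set Ω := {ω | (fun i : Fin (k + 1) => W i ω) ∈ B} with hA
  have hAm : MeasurableSet A :=
    (measurable_pi_lambda (fun ω (i : Fin (k + 1)) => W i ω) (fun i => hW i)) hB
  have key : (μ.restrict A).map (W (k + 1)) = ((μ.restrict A).map (W k)).bind Q := by
    ext S hS
    rw [Measure.map_apply (hW _) hS, Measure.bind_apply hS Q.measurable.aemeasurable,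
      lintegral_map (Q.measurable_coe hS) (hW k), Measure.restrict_apply (hW _ hS)]
    have h1 := hM k (S.indicator 1) (measurable_one.indicator hS)
      (fun y => by by_cases h : y ∈ S <;> simp [h]) (B.indicator 1) (measurable_one.indicator hB)
      (fun y => by by_cases h : y ∈ B <;> simp [h])
    have e1 : ∀ ω, S.indicator (1 : F → ℝ) (W (k + 1) ω)
        * B.indicator (1 : (Fin (k + 1) → F) → ℝ) (fun i => W i ω)
        = (W (k + 1) ⁻¹' S ∩ A).indicator 1 ω := by
      intro ω
      by_cases h : W (k + 1) ω ∈ S <;> by_cases h' : (fun i : Fin (k + 1) => W i ω) ∈ B <;>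
        simp [Set.indicator, h, h', hA]
    have e2 : ∀ ω, (∫ y, S.indicator (1 : F → ℝ) y ∂(Q (W k ω)))
        * B.indicator (1 : (Fin (k + 1) → F) → ℝ) (fun i => W i ω)
        = A.indicator (fun ω => (Q (W k ω)).real S) ω := by
      intro ω
      rw [integral_indicator_one hS]
      by_cases h' : (fun i : Fin (k + 1) => W i ω) ∈ B <;>
        simp [Set.indicator, h', hA]
    simp_rw [e1, e2] at h1
    rw [integral_indicator_one ((hW _ hS).inter hAm), integral_indicator hAm] at h1
    have h2 : ∫ ω in A, (Q (W k ω)).real S ∂μ = (∫⁻ ω in A, Q (W k ω) S ∂μ).toReal := by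
      simp only [measureReal_def]
      exact integral_toReal ((Q.measurable_coe hS).comp (hW k)).aemeasurable
        (Filter.Eventually.of_forall fun ω => measure_lt_top _ _)
    rw [h2, measureReal_def] at h1
    refine (ENNReal.toReal_eq_toReal_iff' (measure_ne_top _ _) ?_).1 h1
    refine ne_top_of_le_ne_top (measure_ne_top μ A) ?_
    calc ∫⁻ ω in A, Q (W k ω) S ∂μ ≤ ∫⁻ ω in A, 1 ∂μ := lintegral_mono fun ω => prob_le_one
      _ = μ A := by simp
  rw [← lintegral_map hf (hW _), key, Measure.lintegral_bind Q.measurable.aemeasurable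
    hf.aemeasurable, lintegral_map hf.lintegral_kernel (hW k)]

/-- The excursion bound of the paper: if `Q̄V̄ ≤ βV̄ + 2b`, `β̄ = β + 2b/(1+R) < 1`,
`V̄ ≤ 2R` on `C`, `V̄ > 1 + R` off `C` and `τ⁺ = inf{k ≥ 1 : W k ∈ C}`, then for every
starting point `w ∈ C`, `E_w[Σ_{k=1}^{τ⁺} V̄(W k)] ≤ 2β̄(R − 1)/(1 − β̄)`.
The sum is written as `Σ_{k≥1} V̄(W k) 1_{k ≤ τ⁺}` (condition: no visit to `C` at times
`1, …, k−1`). -/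
theorem excursion_bound
    {F : Type*} [MeasurableSpace F] (Q : Kernel F F) [IsMarkovKernel Q]
    (Vb : F → ℝ) (hVmeas : Measurable Vb) (hV2 : ∀ u, 2 ≤ Vb u)
    (β b : ℝ) (hβ0 : 0 < β) (hβ1 : β < 1) (hb : 0 < b)
    (hdrift : ∀ u, ∫⁻ v, ENNReal.ofReal (Vb v) ∂(Q u) ≤ ENNReal.ofReal (β * Vb u + 2 * b))
    (R : ℝ) (hR : 1 ≤ R) (hbar : β + 2 * b / (1 + R) < 1)
    (C : Set F) (hCmeas : MeasurableSet C)
    (hVCle : ∀ u, u ∈ C → Vb u ≤ 2 * R) (hVC : ∀ u, u ∉ C → 1 + R < Vb u)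
    {Ω : Type*} [MeasurableSpace Ω] (μ : Measure Ω) [IsProbabilityMeasure μ]
    (W : ℕ → Ω → F) (hchain : IsMarkovChain μ Q W)
    (w : F) (hw : w ∈ C) (hstart : ∀ ω, W 0 ω = w) :
    ∫⁻ ω, ∑' k : ℕ, (if 1 ≤ k ∧ ∀ j, 1 ≤ j → j < k → W j ω ∉ C
        then ENNReal.ofReal (Vb (W k ω)) else 0) ∂μ
      ≤ ENNReal.ofReal (2 * (β + 2 * b / (1 + R)) * (R - 1)
          / (1 - (β + 2 * b / (1 + R)))) := by
  obtain ⟨hW, _⟩ := id hchain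
  set β' := β + 2 * b / (1 + R) with hβ'
  have hβ'0 : 0 < β' := by positivity
  set D : ℝ := β * (2 * R) + 2 * b with hD
  have hVm : Measurable (fun u => ENNReal.ofReal (Vb u)) := hVmeas.ennreal_ofReal
  have hVW : ∀ k, Measurable (fun ω => ENNReal.ofReal (Vb (W k ω))) :=
    fun k => hVm.comp (hW k)
  -- the events
  let A : ℕ → Set Ω := fun k => {ω | ∀ j, 1 ≤ j → j < k → W j ω ∉ C}
  have hAm : ∀ k, MeasurableSet (A k) := by
    intro k
    have : A k = ⋂ j, ⋂ (_ : 1 ≤ j), ⋂ (_ : j < k), (W j ⁻¹' C)ᶜ := by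
      ext ω; simp [A]
    rw [this]
    exact MeasurableSet.iInter fun j => MeasurableSet.iInter fun _ => MeasurableSet.iInter fun _ =>
      (hW j hCmeas).compl
  have hA1 : A 1 = Set.univ := by
    ext ω; simp only [A, Set.mem_ofPred_eq, Set.mem_univ, iff_true]; intro j h1 h2; omega
  have hAsucc : ∀ k, A (k + 2) = A (k + 1) ∩ (W (k + 1) ⁻¹' C)ᶜ := by
    intro k
    ext ω
    simp only [A, Set.mem_ofPred_eq, Set.mem_inter_iff, Set.mem_compl_iff, Set.mem_preimage]
    constructor
    · intro h
      exact ⟨fun j h1 h2 => h j h1 (by omega), h (k + 1) (by omega) (by omega)⟩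
    · rintro ⟨h, h'⟩ j h1 h2
      rcases Nat.lt_or_ge j (k + 1) with h3 | h3
      · exact h j h1 h3
      · obtain rfl : j = k + 1 := by omega
        exact h'
  have hmarkov : ∀ k, ∫⁻ ω in A (k + 1), ENNReal.ofReal (Vb (W (k + 1) ω)) ∂μ
      ≤ ∫⁻ ω in A (k + 1), ENNReal.ofReal (β * Vb (W k ω) + 2 * b) ∂μ := by
    intro k
    have hB : MeasurableSet {v : Fin (k + 1) → F | ∀ j : Fin (k + 1), 1 ≤ (j : ℕ) → v j ∉ C} := by
      have : {v : Fin (k + 1) → F | ∀ j : Fin (k + 1), 1 ≤ (j : ℕ) → v j ∉ C}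
          = ⋂ j : Fin (k + 1), ⋂ (_ : 1 ≤ (j : ℕ)), ((fun v : Fin (k + 1) → F => v j) ⁻¹' C)ᶜ := by
        ext v; simp
      rw [this]
      exact MeasurableSet.iInter fun j => MeasurableSet.iInter fun _ =>
        (measurable_pi_apply j hCmeas).compl
    have h := markov_lintegral_aux μ Q W hchain k _ hB _ hVm
    have e : {ω | (fun i : Fin (k + 1) => W i ω) ∈
        {v : Fin (k + 1) → F | ∀ j : Fin (k + 1), 1 ≤ (j : ℕ) → v j ∉ C}} = A (k + 1) := by
      ext ω
      simp only [A, Set.mem_ofPred_eq]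
      exact ⟨fun h j h1 h2 => h ⟨j, h2⟩ h1, fun h j h1 => h j h1 j.2⟩
    rw [e] at h
    rw [h]
    exact lintegral_mono fun ω => hdrift _
  let a : ℕ → ℝ≥0∞ := fun k => ∫⁻ ω in A (k + 1), ENNReal.ofReal (Vb (W (k + 1) ω)) ∂μ
  let o : ℕ → ℝ≥0∞ := fun k => ∫⁻ ω in A (k + 2), ENNReal.ofReal (Vb (W (k + 1) ω)) ∂μ
  let p : ℕ → ℝ≥0∞ := fun k => μ (A (k + 1))
  have ha0 : a 0 ≤ ENNReal.ofReal D := by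
    refine (hmarkov 0).trans ?_
    calc _ ≤ ∫⁻ ω in A (0 + 1), ENNReal.ofReal D ∂μ := by
          refine lintegral_mono fun ω => ENNReal.ofReal_le_ofReal ?_
          have := hVCle w hw
          rw [hstart, hD]
          gcongr
      _ = ENNReal.ofReal D := by simp [hA1]
  have hao : ∀ k, a (k + 1) ≤ ENNReal.ofReal β' * o k := by
    intro k
    refine (hmarkov (k + 1)).trans ?_
    simp only [o]
    rw [← lintegral_const_mul _ (hVW (k + 1))]
    refine setLIntegral_mono' (hAm _) fun ω hω => ?_
    rw [← ENNReal.ofReal_mul hβ'0.le]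
    refine ENNReal.ofReal_le_ofReal ?_
    have h1 : W (k + 1) ω ∉ C := hω (k + 1) (by omega) (by omega)
    have h2 := hVC _ h1
    have h3 : 2 * b ≤ 2 * b / (1 + R) * Vb (W (k + 1) ω) := by
      rw [div_mul_eq_mul_div, le_div_iff₀ (by linarith)]
      gcongr
    rw [hβ', add_mul]
    linarith
  have h2le : ∀ ω k, (2 : ℝ≥0∞) ≤ ENNReal.ofReal (Vb (W k ω)) := by
    intro ω k
    have := ENNReal.ofReal_le_ofReal (hV2 (W k ω))
    simpa using this
  have hpa : ∀ k, 2 * p k ≤ a k := by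
    intro k
    calc 2 * p k = ∫⁻ ω in A (k + 1), 2 ∂μ := by simp [p]
      _ ≤ a k := lintegral_mono fun ω => h2le ω _
  have hsplit : ∀ k, o k + 2 * p k ≤ a k + 2 * p (k + 1) := by
    intro k
    have hd : MeasurableSet (W (k + 1) ⁻¹' C) := hW _ hCmeas
    have e1 : a k = o k + ∫⁻ ω in A (k + 1) ∩ W (k + 1) ⁻¹' C,
        ENNReal.ofReal (Vb (W (k + 1) ω)) ∂μ := by
      simp only [a, o, hAsucc]
      have := lintegral_inter_add_sdiff (μ := μ) (fun ω => ENNReal.ofReal (Vb (W (k + 1) ω)))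
        (A (k + 1)) hd
      rw [Set.sdiff_eq] at this
      rw [← this]
      exact add_comm _ _
    have e2 : p k = p (k + 1) + μ (A (k + 1) ∩ W (k + 1) ⁻¹' C) := by
      simp only [p, hAsucc]
      have := measure_inter_add_sdiff (μ := μ) (A (k + 1)) hd
      rw [Set.sdiff_eq] at this
      rw [← this]
      exact add_comm _ _
    have e3 : 2 * μ (A (k + 1) ∩ W (k + 1) ⁻¹' C) ≤ ∫⁻ ω in A (k + 1) ∩ W (k + 1) ⁻¹' C,
        ENNReal.ofReal (Vb (W (k + 1) ω)) ∂μ := by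
      calc _ = ∫⁻ ω in A (k + 1) ∩ W (k + 1) ⁻¹' C, 2 ∂μ := by simp
        _ ≤ _ := lintegral_mono fun ω => h2le ω _
    rw [e1, e2, mul_add, add_assoc, add_comm (2 * p (k + 1))]
    gcongr
  have hoa : ∀ k, o k ≤ a k := by
    intro k
    simp only [o, a, hAsucc]
    exact lintegral_mono_set Set.inter_subset_left
  have hpt : ∀ k, p k ≠ ∞ := fun k => measure_ne_top _ _
  have hat : ∀ k, a k ≠ ∞ := by
    intro k
    induction k with
    | zero => exact ne_top_of_le_ne_top ENNReal.ofReal_ne_top ha0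
    | succ k ih =>
      exact ne_top_of_le_ne_top (ENNReal.mul_ne_top ENNReal.ofReal_ne_top
        (ne_top_of_le_ne_top ih (hoa k))) (hao k)
  have hot : ∀ k, o k ≠ ∞ := fun k => ne_top_of_le_ne_top (hat k) (hoa k)
  -- real versions
  have rao : ∀ k, (a (k + 1)).toReal ≤ β' * (o k).toReal := by
    intro k
    have := ENNReal.toReal_mono (ENNReal.mul_ne_top ENNReal.ofReal_ne_top (hot k)) (hao k)
    rwa [ENNReal.toReal_mul, ENNReal.toReal_ofReal hβ'0.le] at this
  have rpa : ∀ k, 2 * (p k).toReal ≤ (a k).toReal := by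
    intro k
    have := ENNReal.toReal_mono (hat k) (hpa k)
    simpa [ENNReal.toReal_mul] using this
  have h2p : ∀ k, 2 * p k ≠ ∞ := fun k => ENNReal.mul_ne_top (by simp) (hpt k)
  have rsplit : ∀ k, (o k).toReal + 2 * (p k).toReal ≤ (a k).toReal + 2 * (p (k + 1)).toReal := by
    intro k
    have := ENNReal.toReal_mono (ENNReal.add_ne_top.2 ⟨hat k, h2p (k + 1)⟩) (hsplit k)
    rw [ENNReal.toReal_add (hot k) (h2p k), ENNReal.toReal_add (hat k) (h2p _)] at this
    simpa [ENNReal.toReal_mul] using this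
  have hDnn : 0 ≤ D := by positivity
  have ra0 : (a 0).toReal ≤ D := ENNReal.toReal_le_of_le_ofReal hDnn ha0
  have rp0 : (p 0).toReal = 1 := by simp [p, hA1]
  have main : ∀ n, (1 - β') * ∑ k ∈ Finset.range (n + 1), (a k).toReal + β' * (a n).toReal
      ≤ D - 2 * β' + 2 * β' * (p n).toReal := by
    intro n
    induction n with
    | zero => simp [rp0]; linarith
    | succ n ih =>
      rw [Finset.sum_range_succ]
      have h1 := rao n
      have h2 := mul_le_mul_of_nonneg_left (rsplit n) hβ'0.le
      nlinarith
  have hDle : D - 2 * β' ≤ 2 * β' * (R - 1) := by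
    have : b ≤ 2 * b / (1 + R) * R := by
      rw [div_mul_eq_mul_div, le_div_iff₀ (by linarith)]
      nlinarith
    rw [hD, hβ']
    nlinarith
  have bound : ∀ n, ∑ k ∈ Finset.range n, a k
      ≤ ENNReal.ofReal (2 * β' * (R - 1) / (1 - β')) := by
    intro n
    refine (Finset.sum_le_sum_of_subset (Finset.range_mono (Nat.le_succ n))).trans ?_
    rw [← ENNReal.ofReal_toReal (ENNReal.sum_ne_top.2 fun k _ => hat k),
      ENNReal.toReal_sum fun k _ => hat k]
    refine ENNReal.ofReal_le_ofReal ?_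
    rw [le_div_iff₀ (by linarith)]
    have h1 := main n
    have h2 := mul_le_mul_of_nonneg_left (rpa n) hβ'0.le
    simp only [Nat.succ_eq_add_one]
    linarith
  have hpt' : ∀ ω, ∑' k : ℕ, (if 1 ≤ k ∧ ∀ j, 1 ≤ j → j < k → W j ω ∉ C
        then ENNReal.ofReal (Vb (W k ω)) else 0)
      = ∑' k : ℕ, (A (k + 1)).indicator (fun ω => ENNReal.ofReal (Vb (W (k + 1) ω))) ω := by
    intro ω
    rw [tsum_eq_zero_add' ENNReal.summable]
    rw [if_neg (by omega), zero_add]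
    refine tsum_congr fun k => ?_
    by_cases h : ω ∈ A (k + 1)
    · rw [Set.indicator_of_mem h, if_pos ⟨by omega, h⟩]
    · rw [Set.indicator_of_notMem h, if_neg fun h' => h h'.2]
  simp_rw [hpt']
  rw [lintegral_tsum fun k => ((hVW (k + 1)).indicator (hAm _)).aemeasurable]
  simp_rw [lintegral_indicator (hAm _)]
  exact ENNReal.tsum_le_of_sum_range_le bound
end

section
/- Let (W_k)_{k≥0} be a Markov chain with kernel Q̄ on a measurable space F and let V̄ : F → [2,∞) satisfy Q̄V̄ ≤ βV̄ + 2b on F with 0 < β < 1, b > 0. Fix R ≥ 1 with β̄ := β + 2b/(1+R) < 1 and a measurable set C ⊂ F with V̄ ≤ 2R on C and V̄ > 1 + R off C. Let τ(1) := inf{k ≥ 0 : W_k ∈ C} and τ(j+1) := inf{k > τ(j) : W_k ∈ C} be the successive hitting times of C, and let (B_j)_{j≥1} be {0,1}-valued random variables that are, conditionally on the whole chain, independent with P(B_j = 1 | (W_k)) = c for a constant c ∈ (0,1]. Set τ_A := τ(J) where J := inf{j ≥ 1 : B_j = 1}. Then for every starting point w ∈ F, E_w[ Σ_{k=0}^{τ_A}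 V̄(W_k) ] ≤ ( V̄(w) − 2β̄R )/(1 − β̄) + 2β̄(R − 1)/( c(1 − β̄) ). -/
open MeasureTheory ProbabilityTheory Real ENNReal
open scoped Classical

lemma chain_lintegral {F : Type*} [MeasurableSpace F] {Ω : Type*} [MeasurableSpace Ω]
    {μ : Measure Ω} [IsProbabilityMeasure μ] {Q : Kernel F F} [IsMarkovKernel Q]
    {W : ℕ → Ω → F} (hchain : IsMarkovChain μ Q W) (k : ℕ)
    (G : F → ENNReal) (hG : Measurable G) (H : (Fin (k + 1) → F) → ENNReal) (hH : Measurable H) :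
    ∫⁻ ω, H (fun i => W i ω) * G (W (k + 1) ω) ∂μ
      = ∫⁻ ω, H (fun i => W i ω) * (∫⁻ y, G y ∂(Q (W k ω))) ∂μ := by
  obtain ⟨hW, hM⟩ := hchain
  have hpast : Measurable (fun ω => (fun i : Fin (k+1) => W i ω)) :=
    measurable_pi_lambda _ (fun i => hW i)
  have hlast : Measurable (fun v : Fin (k+1) → F => v (Fin.last k)) := measurable_pi_apply _
  set P := μ.map (fun ω => (fun i : Fin (k+1) => W i ω)) with hP
  have : IsProbabilityMeasure P := Measure.isProbabilityMeasure_map hpast.aemeasurable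
  set κ := Q.comap (fun v : Fin (k+1) → F => v (Fin.last k)) hlast with hκ
  have hpair : Measurable (fun ω => ((fun i : Fin (k+1) => W i ω), W (k+1) ω)) :=
    hpast.prodMk (hW _)
  have key : μ.map (fun ω => ((fun i : Fin (k+1) => W i ω), W (k+1) ω)) = P ⊗ₘ κ := by
    have : IsProbabilityMeasure
      (μ.map (fun ω => ((fun i : Fin (k+1) => W i ω), W (k+1) ω))) :=
      Measure.isProbabilityMeasure_map hpair.aemeasurable
    apply Measure.ext_prod
    intro s t hs ht
    rw [Measure.compProd_apply_prod hs ht, Measure.map_apply hpair (hs.prod ht)]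
    rw [hP, setLIntegral_map hs (Kernel.measurable_coe _ ht) hpast]
    have h1 := hM k (t.indicator 1) (measurable_one.indicator ht)
      (by intro y; by_cases hy : y ∈ t <;> simp [hy]) (s.indicator 1) (measurable_one.indicator hs)
      (by intro y; by_cases hy : y ∈ s <;> simp [hy])
    have e1 : ∀ ω, t.indicator (1 : F → ℝ) (W (k+1) ω) *
        s.indicator (1 : (Fin (k+1) → F) → ℝ) (fun i => W i ω)
        = ((fun ω => ((fun i : Fin (k+1) => W i ω), W (k+1) ω)) ⁻¹' (s ×ˢ t)).indicator
          (1 : Ω → ℝ) ω := by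
      intro ω
      by_cases h1 : W (k+1) ω ∈ t <;> by_cases h2 : (fun i : Fin (k+1) => W i ω) ∈ s <;>
        simp [Set.indicator, h1, h2]
    have e2 : ∀ ω, (∫ y, t.indicator (1 : F → ℝ) y ∂(Q (W k ω))) *
        s.indicator (1 : (Fin (k+1) → F) → ℝ) (fun i => W i ω)
        = ((fun ω => (fun i : Fin (k+1) => W i ω)) ⁻¹' s).indicator
          (fun ω => (Q (W k ω)).real t) ω := by
      intro ω
      rw [integral_indicator_one ht]
      by_cases h2 : (fun i : Fin (k+1) => W i ω) ∈ s <;>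
        simp [Set.indicator, h2]
    simp_rw [e1, e2] at h1
    rw [integral_indicator_one (hpair (hs.prod ht)), integral_indicator (hpast hs)] at h1
    have h2 : ∫ ω in (fun ω => (fun i : Fin (k+1) => W i ω)) ⁻¹' s, (Q (W k ω)).real t ∂μ
        = (∫⁻ ω in (fun ω => (fun i : Fin (k+1) => W i ω)) ⁻¹' s, (Q (W k ω)) t ∂μ).toReal := by
      apply integral_toReal
      · exact ((Kernel.measurable_coe Q ht).comp (hW k)).aemeasurable
      · exact Filter.Eventually.of_forall fun ω => measure_lt_top _ _
    rw [h2] at h1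
    have h3 : ∫⁻ ω in (fun ω => (fun i : Fin (k+1) => W i ω)) ⁻¹' s, (Q (W k ω)) t ∂μ ≠ ⊤ := by
      refine ne_top_of_le_ne_top (b := 1) (by simp) ?_
      calc _ ≤ ∫⁻ ω in (fun ω => (fun i : Fin (k+1) => W i ω)) ⁻¹' s, 1 ∂μ :=
            lintegral_mono fun ω => prob_le_one
        _ ≤ 1 := by simpa using prob_le_one
    have := (ENNReal.toReal_eq_toReal_iff' (measure_ne_top _ _) h3).1 h1
    rw [this]
    simp [hκ, Kernel.comap_apply]
  have hm : Measurable (fun p : (Fin (k+1) → F) × F => H p.1 * G p.2) := by fun_prop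
  have l1 : ∫⁻ ω, H (fun i => W i ω) * G (W (k + 1) ω) ∂μ
      = ∫⁻ p, H p.1 * G p.2 ∂(μ.map (fun ω => ((fun i : Fin (k+1) => W i ω), W (k+1) ω))) := by
    rw [lintegral_map hm hpair]
  rw [l1, key, Measure.lintegral_compProd hm]
  have l2 : ∀ v, ∫⁻ y, H v * G y ∂(κ v) = H v * ∫⁻ y, G y ∂(κ v) :=
    fun v => lintegral_const_mul _ hG
  simp_rw [l2]
  rw [hP, lintegral_map _ hpast]
  · simp [hκ, Kernel.comap_apply]
  · exact hH.mul (hG.lintegral_kernel)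

lemma marks_false {F : Type*} [MeasurableSpace F] {Ω : Type*} [MeasurableSpace Ω]
    (μ : Measure Ω) (c : ℝ) (hc0 : 0 < c) (hc1 : c ≤ 1)
    (W : ℕ → Ω → F) (hW : ∀ k, Measurable (W k))
    (B : ℕ → Ω → Bool) (hBmeas : ∀ j, Measurable (B j))
    (hBernoulli : ∀ S : Finset ℕ, (∀ j ∈ S, 1 ≤ j) →
      ∀ h : (ℕ → F) → ENNReal, Measurable h →
        ∫⁻ ω, (∏ j ∈ S, (if B j ω = true then (1 : ENNReal) else 0))
            * h (fun k => W k ω) ∂μ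
          = ENNReal.ofReal c ^ S.card * ∫⁻ ω, h (fun k => W k ω) ∂μ)
    (h : (ℕ → F) → ENNReal) (hh : Measurable h) (hfin : ∫⁻ ω, h (fun k => W k ω) ∂μ ≠ ⊤)
    (T : Finset ℕ) : ∀ S : Finset ℕ, (∀ j ∈ S, 1 ≤ j) → (∀ j ∈ T, 1 ≤ j) → Disjoint S T →
        ∫⁻ ω, (∏ j ∈ T, (if B j ω = false then (1 : ENNReal) else 0)) *
          ((∏ j ∈ S, (if B j ω = true then (1 : ENNReal) else 0)) * h (fun k => W k ω)) ∂μ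
          = ENNReal.ofReal (1 - c) ^ T.card * (ENNReal.ofReal c ^ S.card
            * ∫⁻ ω, h (fun k => W k ω) ∂μ) := by
  have hWm : Measurable (fun ω => fun k => W k ω) := measurable_pi_lambda _ hW
  have mt : ∀ j, Measurable (fun ω => (if B j ω = true then (1 : ENNReal) else 0)) := fun j =>
    Measurable.ite (hBmeas j (measurableSet_singleton true)) measurable_const measurable_const
  have mf : ∀ j, Measurable (fun ω => (if B j ω = false then (1 : ENNReal) else 0)) := fun j =>
    Measurable.ite (hBmeas j (measurableSet_singleton false)) measurable_const measurable_const
  induction T using Finset.induction_on with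
  | empty =>
    intro S hS _ _
    simpa using hBernoulli S hS h hh
  | insert a T ha ih =>
    intro S hS hT hd
    rw [Finset.disjoint_insert_right] at hd
    have hT' : ∀ j ∈ T, 1 ≤ j := fun j hj => hT j (Finset.mem_insert_of_mem hj)
    have i1 := ih S hS hT' hd.2
    have i2 := ih (insert a S) (by
      intro j hj
      rcases Finset.mem_insert.1 hj with rfl | hj
      · exact hT _ (Finset.mem_insert_self _ _)
      · exact hS j hj) hT' (Finset.disjoint_insert_left.2 ⟨ha, hd.2⟩)
    set I := ∫⁻ ω, h (fun k => W k ω) ∂μ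
    rw [Finset.card_insert_of_notMem hd.1] at i2
    rw [Finset.card_insert_of_notMem ha]
    simp only [Finset.prod_insert hd.1] at i2
    simp only [Finset.prod_insert ha]
    have hsplit : ∫⁻ ω, (∏ j ∈ T, (if B j ω = false then (1 : ENNReal) else 0)) *
          ((∏ j ∈ S, (if B j ω = true then (1 : ENNReal) else 0)) * h (fun k => W k ω)) ∂μ
        = (∫⁻ ω, ((if B a ω = false then (1 : ENNReal) else 0) *
            ∏ j ∈ T, (if B j ω = false then (1 : ENNReal) else 0)) *
          ((∏ j ∈ S, (if B j ω = true then (1 : ENNReal) else 0)) * h (fun k => W k ω)) ∂μ) +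
          ∫⁻ ω, (∏ j ∈ T, (if B j ω = false then (1 : ENNReal) else 0)) *
          (((if B a ω = true then (1 : ENNReal) else 0) *
            ∏ j ∈ S, (if B j ω = true then (1 : ENNReal) else 0)) * h (fun k => W k ω)) ∂μ := by
      rw [← lintegral_add_left]
      · apply lintegral_congr
        intro ω
        cases B a ω <;> simp
      · exact (((mf a).mul (Finset.measurable_prod _ fun j _ => mf j)).mul
          ((Finset.measurable_prod _ fun j _ => mt j).mul (hh.comp hWm)))
    rw [i1, i2] at hsplit
    have hone : ENNReal.ofReal (1 - c) + ENNReal.ofReal c = 1 := by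
      rw [← ENNReal.ofReal_add (by linarith) hc0.le]; simp
    have hX : ENNReal.ofReal (1 - c) ^ T.card * (ENNReal.ofReal c ^ (S.card + 1) * I) ≠ ⊤ := by
      refine ENNReal.mul_ne_top (by finiteness) (ENNReal.mul_ne_top (by finiteness) hfin)
    refine (ENNReal.add_left_inj hX).1 ?_
    rw [← hsplit]
    calc _ = (ENNReal.ofReal (1 - c) + ENNReal.ofReal c) *
          (ENNReal.ofReal (1 - c) ^ T.card * (ENNReal.ofReal c ^ S.card * I)) := by
            rw [hone, one_mul]
      _ = _ := by ring

lemma event_iff {F Ω : Type*} (W : ℕ → Ω → F) (B : ℕ → Ω → Bool) (C : Set F) (ω : Ω) (k : ℕ) :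
    (∀ m < k, W m ω ∈ C →
            B (((Finset.range m).filter (fun i => W i ω ∈ C)).card + 1) ω = false) ↔
    ∀ j ∈ Finset.Icc 1 (((Finset.range k).filter (fun i => W i ω ∈ C)).card), B j ω = false := by
  induction k with
  | zero => simp
  | succ k ih =>
    rw [Nat.forall_lt_succ_right, ih, Finset.range_add_one, Finset.filter_insert]
    by_cases hk : W k ω ∈ C
    · rw [if_pos hk, Finset.card_insert_of_notMem (by simp)]
      constructor
      · rintro ⟨h1, h2⟩ j hj
        rw [Finset.mem_Icc] at hj
        rcases Nat.lt_or_ge j (((Finset.range k).filter (fun i => W i ω ∈ C)).card + 1) with h | h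
        · exact h1 j (Finset.mem_Icc.2 ⟨hj.1, by omega⟩)
        · have : j = ((Finset.range k).filter (fun i => W i ω ∈ C)).card + 1 := by omega
          rw [this]; exact h2 hk
      · intro h
        refine ⟨fun j hj => h j ?_, fun _ => h _ ?_⟩
        · rw [Finset.mem_Icc] at hj ⊢; omega
        · rw [Finset.mem_Icc]; omega
    · simp [hk]

lemma term_eq {F : Type*} [MeasurableSpace F] {Ω : Type*} [MeasurableSpace Ω]
    (μ : Measure Ω) (c : ℝ) (hc0 : 0 < c) (hc1 : c ≤ 1)
    (C : Set F) (hCmeas : MeasurableSet C)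
    (W : ℕ → Ω → F) (hW : ∀ k, Measurable (W k))
    (B : ℕ → Ω → Bool) (hBmeas : ∀ j, Measurable (B j))
    (hBernoulli : ∀ S : Finset ℕ, (∀ j ∈ S, 1 ≤ j) →
      ∀ h : (ℕ → F) → ENNReal, Measurable h →
        ∫⁻ ω, (∏ j ∈ S, (if B j ω = true then (1 : ENNReal) else 0))
            * h (fun k => W k ω) ∂μ
          = ENNReal.ofReal c ^ S.card * ∫⁻ ω, h (fun k => W k ω) ∂μ)
    (f : F → ENNReal) (hf : Measurable f) (k : ℕ) (hfin : ∫⁻ ω, f (W k ω) ∂μ ≠ ⊤) :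
    Measurable (fun ω => (if ∀ m < k, W m ω ∈ C →
            B (((Finset.range m).filter (fun i => W i ω ∈ C)).card + 1) ω = false
          then f (W k ω) else 0)) ∧
    ∫⁻ ω, (if ∀ m < k, W m ω ∈ C →
            B (((Finset.range m).filter (fun i => W i ω ∈ C)).card + 1) ω = false
          then f (W k ω) else 0) ∂μ =
    ∫⁻ ω, (∏ i ∈ Finset.range k, (if W i ω ∈ C then ENNReal.ofReal (1 - c) else 1))
      * f (W k ω) ∂μ := by
  have hWm : Measurable (fun ω => fun k => W k ω) := measurable_pi_lambda _ hW
  have mf : ∀ j, Measurable (fun ω => (if B j ω = false then (1 : ENNReal) else 0)) := fun j =>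
    Measurable.ite (hBmeas j (measurableSet_singleton false)) measurable_const measurable_const
  let h : ℕ → (ℕ → F) → ENNReal := fun n x =>
    if ((Finset.range k).filter (fun i => x i ∈ C)).card = n then f (x k) else 0
  have hh : ∀ n, Measurable (h n) := by
    intro n
    have : Measurable (fun x : ℕ → F => ((Finset.range k).filter (fun i => x i ∈ C)).card) := by
      simp_rw [Finset.card_filter]
      exact Finset.measurable_sum _ fun i _ => Measurable.ite
        (measurable_pi_apply i hCmeas) measurable_const measurable_const
    exact Measurable.ite (this (measurableSet_singleton n)) (hf.comp (measurable_pi_apply k))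
      measurable_const
  have hsum : ∀ (g : ℕ → ENNReal) (ω : Ω),
      ∑ n ∈ Finset.range (k+1), g n * h n (fun k => W k ω)
      = g (((Finset.range k).filter (fun i => W i ω ∈ C)).card) * f (W k ω) := by
    intro g ω
    have hle : ((Finset.range k).filter (fun i => W i ω ∈ C)).card ≤ k := by
      simpa using Finset.card_filter_le (Finset.range k) (fun i => W i ω ∈ C)
    rw [Finset.sum_eq_single (((Finset.range k).filter (fun i => W i ω ∈ C)).card)]
    · simp [h]
    · intro n _ hn
      simp [h, hn.symm]
    · intro hn
      exact absurd (Finset.mem_range.2 (by omega)) hn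
  have hL : ∀ ω, (if ∀ m < k, W m ω ∈ C →
            B (((Finset.range m).filter (fun i => W i ω ∈ C)).card + 1) ω = false
          then f (W k ω) else 0) = ∑ n ∈ Finset.range (k+1),
          (∏ j ∈ Finset.Icc 1 n, (if B j ω = false then (1 : ENNReal) else 0))
            * h n (fun k => W k ω) := by
    intro ω
    rw [hsum (fun n => ∏ j ∈ Finset.Icc 1 n, (if B j ω = false then (1 : ENNReal) else 0))]
    rw [Finset.prod_ite_zero]
    simp only [event_iff W B C ω k]
    split_ifs <;> simp
  have hR : ∀ ω, (∏ i ∈ Finset.range k, (if W i ω ∈ C then ENNReal.ofReal (1 - c) else 1))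
      * f (W k ω) = ∑ n ∈ Finset.range (k+1),
          ENNReal.ofReal (1 - c) ^ n * h n (fun k => W k ω) := by
    intro ω
    rw [hsum (fun n => ENNReal.ofReal (1 - c) ^ n), ← Finset.prod_filter, Finset.prod_const]
  have mh : ∀ n, Measurable (fun ω => h n (fun k => W k ω)) := fun n => (hh n).comp hWm
  have mL : ∀ n, Measurable (fun ω => (∏ j ∈ Finset.Icc 1 n,
      (if B j ω = false then (1 : ENNReal) else 0)) * h n (fun k => W k ω)) := fun n =>
    (Finset.measurable_prod _ fun j _ => mf j).mul (mh n)
  simp_rw [hL, hR]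
  refine ⟨Finset.measurable_sum _ fun n _ => mL n, ?_⟩
  rw [lintegral_finsetSum _ fun n _ => mL n, lintegral_finsetSum _ fun n _ => (mh n).const_mul _]
  refine Finset.sum_congr rfl fun n _ => ?_
  rw [lintegral_const_mul _ (mh n)]
  have hfin' : ∫⁻ ω, h n (fun k => W k ω) ∂μ ≠ ⊤ := by
    refine ne_top_of_le_ne_top hfin (lintegral_mono fun ω => ?_)
    simp only [h]
    split_ifs <;> simp
  have := marks_false μ c hc0 hc1 W hW B hBmeas hBernoulli (h n) (hh n) hfin' (Finset.Icc 1 n) ∅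
    (by simp) (fun j hj => (Finset.mem_Icc.1 hj).1) (by simp)
  simpa using this

lemma drift_ineq {F : Type*} [MeasurableSpace F] (Q : Kernel F F) [IsMarkovKernel Q]
    (Vb : F → ℝ) (hVmeas : Measurable Vb) (hV2 : ∀ u, 2 ≤ Vb u)
    (β b : ℝ) (hβ0 : 0 < β) (hb : 0 < b)
    (hdrift : ∀ u, ∫⁻ v, ENNReal.ofReal (Vb v) ∂(Q u) ≤ ENNReal.ofReal (β * Vb u + 2 * b))
    (R : ℝ) (hR : 1 ≤ R) (r : ℝ) (hr : r = β + 2 * b / (1 + R)) (hbar : r < 1)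
    (C : Set F)
    (hVCle : ∀ u, u ∈ C → Vb u ≤ 2 * R) (hVC : ∀ u, u ∉ C → 1 + R < Vb u)
    (c : ℝ) (hc0 : 0 < c) (hc1 : c ≤ 1) (u : F) :
    ENNReal.ofReal (Vb u) + (if u ∈ C then ENNReal.ofReal (1 - c) else 1) *
      ∫⁻ v, ENNReal.ofReal ((Vb v - 2 * r * R) / (1 - r) + 2 * r * (R - 1) / (c * (1 - r))) ∂(Q u)
    ≤ ENNReal.ofReal ((Vb u - 2 * r * R) / (1 - r) + 2 * r * (R - 1) / (c * (1 - r))) := by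
  have hr0 : 0 < r := by rw [hr]; positivity
  have h1r : 0 < 1 - r := by linarith
  set D := 2 * r * (R - 1) / c with hD
  have hD1 : 2 * r * (R - 1) ≤ D := by
    rw [hD, le_div_iff₀ hc0]
    nlinarith [mul_nonneg hr0.le (by linarith : 0 ≤ R - 1)]
  have hcD : c * D = 2 * r * (R - 1) := by rw [hD]; field_simp
  have hg : ∀ v, (Vb v - 2 * r * R) / (1 - r) + 2 * r * (R - 1) / (c * (1 - r))
      = (Vb v + (D - 2 * r * R)) / (1 - r) := by
    intro v; rw [hD]; field_simp; ring
  simp_rw [hg]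
  have hpos : ∀ v, 0 ≤ (Vb v + (D - 2 * r * R)) / (1 - r) := by
    intro v
    apply div_nonneg _ h1r.le
    nlinarith [hV2 v]
  have hint : Integrable Vb (Q u) := by
    refine ⟨hVmeas.aestronglyMeasurable, ?_⟩
    rw [hasFiniteIntegral_iff_ofReal (Filter.Eventually.of_forall fun v => by
      have := hV2 v; simp only [Pi.zero_apply]; linarith)]
    exact lt_of_le_of_lt (hdrift u) ENNReal.ofReal_lt_top
  have hQV : ∫ v, Vb v ∂(Q u) ≤ β * Vb u + 2 * b := by
    have h0 := hdrift u
    rw [← ofReal_integral_eq_lintegral_ofReal hint (Filter.Eventually.of_forall fun v => by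
      have := hV2 v; simp only [Pi.zero_apply]; linarith)] at h0
    refine (ENNReal.ofReal_le_ofReal_iff ?_).1 h0
    have := hV2 u
    positivity
  have hgi : Integrable (fun v => (Vb v + (D - 2 * r * R)) / (1 - r)) (Q u) :=
    (hint.add (integrable_const _)).div_const _
  rw [← ofReal_integral_eq_lintegral_ofReal hgi
    (Filter.Eventually.of_forall fun v => hpos v)]
  rw [integral_div]
  have hia : ∫ v, (Vb v + (D - 2 * r * R)) ∂(Q u)
      = ∫ v, Vb v ∂(Q u) + (D - 2 * r * R) := by
    rw [integral_add hint (integrable_const _)]; simp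
  rw [hia]
  set q := ∫ v, Vb v ∂(Q u)
  have hb2 : 2 * b = (r - β) * (1 + R) := by rw [hr]; field_simp; ring
  have hrβ : 0 ≤ r - β := by rw [hr]; simp; positivity
  have hVu := hV2 u
  by_cases hu : u ∈ C
  · have hq : q ≤ 2 * r * R := by
      have := hVCle u hu
      nlinarith
    rw [if_pos hu, ← ENNReal.ofReal_mul (by linarith)]
    have hle : (1 - c) * ((q + (D - 2 * r * R)) / (1 - r)) ≤ (1 - c) * (D / (1 - r)) := by
      apply mul_le_mul_of_nonneg_left _ (by linarith)
      gcongr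
      linarith
    have hD0 : 0 ≤ D := le_trans (by nlinarith) hD1
    calc _ ≤ ENNReal.ofReal (Vb u) + ENNReal.ofReal ((1 - c) * (D / (1 - r))) := by
            gcongr
      _ = ENNReal.ofReal (Vb u + (1 - c) * (D / (1 - r))) := by
            rw [ENNReal.ofReal_add (by linarith)]
            exact mul_nonneg (by linarith) (by positivity)
      _ ≤ _ := by
            apply ENNReal.ofReal_le_ofReal
            rw [le_div_iff₀ h1r]
            have : (Vb u + (1 - c) * (D / (1 - r))) * (1 - r) = Vb u * (1 - r) + (1 - c) * D := by
              field_simp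
            rw [this]
            nlinarith
  · have hq : q ≤ r * Vb u := by
      have := hVC u hu
      nlinarith
    rw [if_neg hu, one_mul]
    have e : (Vb u + (D - 2 * r * R)) / (1 - r)
        = Vb u + (r * Vb u + (D - 2 * r * R)) / (1 - r) := by
      field_simp; ring
    have hp2 : 0 ≤ r * Vb u + (D - 2 * r * R) := by
      have := hVC u hu
      nlinarith
    rw [e, ENNReal.ofReal_add (by linarith) (div_nonneg hp2 h1r.le)]
    gcongr

/-- Nummelin-splitting bound of the paper: with regeneration marks `B j` that are,
conditionally on the whole chain, iid Bernoulli(`c`) (expressed by the product formula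
against every nonnegative measurable functional of the chain), and `τ_A` the time of
the first visit to `C` carrying a mark `1` (the `J`-th visit to `C`, `J` the first
index with `B J = 1`), one has
`E_w[Σ_{k=0}^{τ_A} V̄(W k)] ≤ (V̄(w) − 2β̄R)/(1 − β̄) + 2β̄(R − 1)/(c(1 − β̄))`.
The event `k ≤ τ_A` is: no time `m < k` is a visit to `C` whose mark equals `1`;
the mark attached to a visit at time `m` is `B (v + 1)` where `v` is the number of
visits to `C` before time `m`. -/
theorem atom_hitting_time_bound
    {F : Type*} [MeasurableSpace F] (Q : Kernel F F) [IsMarkovKernel Q]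
    (Vb : F → ℝ) (hVmeas : Measurable Vb) (hV2 : ∀ u, 2 ≤ Vb u)
    (β b : ℝ) (hβ0 : 0 < β) (hβ1 : β < 1) (hb : 0 < b)
    (hdrift : ∀ u, ∫⁻ v, ENNReal.ofReal (Vb v) ∂(Q u) ≤ ENNReal.ofReal (β * Vb u + 2 * b))
    (R : ℝ) (hR : 1 ≤ R) (hbar : β + 2 * b / (1 + R) < 1)
    (C : Set F) (hCmeas : MeasurableSet C)
    (hVCle : ∀ u, u ∈ C → Vb u ≤ 2 * R) (hVC : ∀ u, u ∉ C → 1 + R < Vb u)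
    (c : ℝ) (hc0 : 0 < c) (hc1 : c ≤ 1)
    {Ω : Type*} [MeasurableSpace Ω] (μ : Measure Ω) [IsProbabilityMeasure μ]
    (W : ℕ → Ω → F) (hchain : IsMarkovChain μ Q W)
    (B : ℕ → Ω → Bool) (hBmeas : ∀ j, Measurable (B j))
    -- conditionally on the whole chain, the marks `B j`, `j ≥ 1`, are iid Bernoulli(c)
    (hBernoulli : ∀ S : Finset ℕ, (∀ j ∈ S, 1 ≤ j) →
      ∀ h : (ℕ → F) → ENNReal, Measurable h →
        ∫⁻ ω, (∏ j ∈ S, (if B j ω = true then (1 : ENNReal) else 0))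
            * h (fun k => W k ω) ∂μ
          = ENNReal.ofReal c ^ S.card * ∫⁻ ω, h (fun k => W k ω) ∂μ)
    (w : F) (hstart : ∀ ω, W 0 ω = w) :
    ∫⁻ ω, ∑' k : ℕ,
        (if ∀ m < k, W m ω ∈ C →
            B (((Finset.range m).filter (fun i => W i ω ∈ C)).card + 1) ω = false
          then ENNReal.ofReal (Vb (W k ω)) else 0) ∂μ
      ≤ ENNReal.ofReal ((Vb w - 2 * (β + 2 * b / (1 + R)) * R)
            / (1 - (β + 2 * b / (1 + R)))
          + 2 * (β + 2 * b / (1 + R)) * (R - 1)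
            / (c * (1 - (β + 2 * b / (1 + R))))) := by
  have hW := hchain.1
  set r := β + 2 * b / (1 + R) with hr
  have hvm : Measurable (fun u => ENNReal.ofReal (Vb u)) := hVmeas.ennreal_ofReal
  have hVk : ∀ k, Measurable (fun ω => ENNReal.ofReal (Vb (W k ω))) := fun k => hvm.comp (hW k)
  have hfin : ∀ k, ∫⁻ ω, ENNReal.ofReal (Vb (W k ω)) ∂μ ≠ ⊤ := by
    intro k
    induction k with
    | zero => simp [hstart]
    | succ k ih =>
      have h1 := chain_lintegral hchain k _ hvm (fun _ => 1) measurable_const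
      simp only [one_mul] at h1
      rw [h1]
      have h2 : ∫⁻ ω, (ENNReal.ofReal β * ENNReal.ofReal (Vb (W k ω)) + ENNReal.ofReal (2 * b)) ∂μ
          ≠ ⊤ := by
        rw [lintegral_add_right _ measurable_const, lintegral_const_mul _ (hVk k)]
        simp only [lintegral_const, measure_univ, mul_one]
        exact ENNReal.add_ne_top.2 ⟨ENNReal.mul_ne_top ENNReal.ofReal_ne_top ih,
          ENNReal.ofReal_ne_top⟩
      refine ne_top_of_le_ne_top h2 (lintegral_mono fun ω => ?_)
      refine (hdrift _).trans ?_
      have := hV2 (W k ω)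
      rw [ENNReal.ofReal_add (by positivity) (by positivity), ENNReal.ofReal_mul hβ0.le]
  have hterm := fun k => term_eq μ c hc0 hc1 C hCmeas W hW B hBmeas hBernoulli _ hvm k (hfin k)
  rw [lintegral_tsum fun k => (hterm k).1.aemeasurable]
  simp_rw [fun k => (hterm k).2]
  set G : F → ENNReal := fun v =>
    ENNReal.ofReal ((Vb v - 2 * r * R) / (1 - r) + 2 * r * (R - 1) / (c * (1 - r))) with hG
  have hGm : Measurable G := by
    apply Measurable.ennreal_ofReal
    fun_prop
  have mi : ∀ i : ℕ, Measurable
      (fun ω => (if W i ω ∈ C then ENNReal.ofReal (1 - c) else 1)) := fun i =>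
    Measurable.ite (hW i hCmeas) measurable_const measurable_const
  have mp : ∀ n : ℕ, Measurable (fun ω => ∏ i ∈ Finset.range n,
      (if W i ω ∈ C then ENNReal.ofReal (1 - c) else 1)) := fun n =>
    Finset.measurable_prod _ fun i _ => mi i
  have hstep : ∀ n : ℕ, (∑ k ∈ Finset.range n, ∫⁻ ω, (∏ i ∈ Finset.range k,
      (if W i ω ∈ C then ENNReal.ofReal (1 - c) else 1)) * ENNReal.ofReal (Vb (W k ω)) ∂μ) +
      ∫⁻ ω, (∏ i ∈ Finset.range n,
      (if W i ω ∈ C then ENNReal.ofReal (1 - c) else 1)) * G (W n ω) ∂μ ≤ G w := by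
    intro n
    induction n with
    | zero => simp [hstart]
    | succ n ih =>
      refine le_trans ?_ ih
      rw [Finset.sum_range_succ, add_assoc]
      gcongr
      have h1 := chain_lintegral hchain n G hGm
        (fun v => ∏ i, (if v i ∈ C then ENNReal.ofReal (1 - c) else 1))
        (Finset.measurable_prod _ fun i _ => Measurable.ite (measurable_pi_apply i hCmeas)
          measurable_const measurable_const)
      have h2 : ∀ ω, ∏ i : Fin (n+1), (if W i ω ∈ C then ENNReal.ofReal (1 - c) else 1)
          = ∏ i ∈ Finset.range (n+1), (if W i ω ∈ C then ENNReal.ofReal (1 - c) else 1) :=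
        fun ω => (Finset.prod_range
          (fun i => if W i ω ∈ C then ENNReal.ofReal (1 - c) else 1)).symm
      simp only [h2] at h1
      have hm2 : Measurable (fun ω => (∏ i ∈ Finset.range n,
        (if W i ω ∈ C then ENNReal.ofReal (1 - c) else 1)) * ENNReal.ofReal (Vb (W n ω))) :=
        (mp n).mul (hVk n)
      rw [h1, ← lintegral_add_left hm2]
      refine lintegral_mono fun ω => ?_
      simp only
      rw [Finset.prod_range_succ, mul_assoc, ← mul_add]
      gcongr
      exact drift_ineq Q Vb hVmeas hV2 β b hβ0 hb hdrift R hR r hr hbar C hVCle hVC c hc0 hc1 _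
  rw [ENNReal.tsum_eq_iSup_nat]
  exact iSup_le fun n => le_self_add.trans (hstep n)
end

section
/- Let μ and ν be probability measures on a measurable space E, let V : E → [1,∞) be measurable with ∫V² dμ < ∞ and ∫V² dν < ∞, and let d_V(u,v) := (V(u)+V(v))·1_{u≠v}. Define W_{1,d_V}(μ,ν) := inf_π E_π[d_V(X,Y)], the infimum over all couplings π of μ and ν. Then for all constants c > 0 and λ > 0, c · W_{1,d_V}(μ, ν) ≤ (λc²/2)( ∫V² dμ + ∫V² dν ) + λ⁻¹ · KL(ν, μ), where KL(ν, μ) = ∫ log(dν/dμ) dν is the Kullback–Leibler divergence (equal to +∞ if ν is not absolutely continuous with respect to μ). -/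
open MeasureTheory ProbabilityTheory Real ENNReal
open scoped Classical

/-- The Kullback–Leibler divergence `KL(ν, μ) = ∫ log(dν/dμ) dν`, equal to `∞` if `ν`
is not absolutely continuous with respect to `μ` (or the integral is not defined). -/
noncomputable def klDiv {E : Type*} [MeasurableSpace E] (ν μ : Measure E) : ENNReal :=
  if ν ≪ μ ∧ Integrable (llr ν μ) ν then ENNReal.ofReal (∫ x, llr ν μ x ∂ν) else ⊤

/-- The Hairer–Mattingly distance `d_V(u,v) = (V u + V v) 1_{u ≠ v}`. -/
noncomputable def dV {E : Type*} (V : E → ℝ) (u v : E) : ℝ :=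
  if u = v then 0 else V u + V v

lemma aux_log_lo {r : ℝ} (h0 : 0 ≤ r) (h1 : r ≤ 1) :
    (1 - r) ^ 2 ≤ 2 * InformationTheory.klFun r := by
  unfold InformationTheory.klFun
  have hanti : AntitoneOn (fun x : ℝ => 2 * (x * Real.log x + 1 - x) - (1 - x) ^ 2) (Set.Icc 0 1) := by
    apply antitoneOn_of_deriv_nonpos (convex_Icc 0 1)
    · have := Real.continuous_mul_log
      fun_prop
    · intro x hx
      rw [interior_Icc] at hx
      have hx0 : x ≠ 0 := hx.1.ne'
      have := (((Real.hasDerivAt_mul_log hx0).add_const 1).sub (hasDerivAt_id x)).const_mul 2 |>.sub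
        (((hasDerivAt_id x).const_sub 1).pow 2)
      exact this.differentiableAt.differentiableWithinAt
    · intro x hx
      rw [interior_Icc] at hx
      have hx0 : x ≠ 0 := hx.1.ne'
      have := (((Real.hasDerivAt_mul_log hx0).add_const 1).sub (hasDerivAt_id x)).const_mul 2 |>.sub
        (((hasDerivAt_id x).const_sub 1).pow 2)
      have h2 := this.deriv
      have h3 := Real.log_le_sub_one_of_pos hx.1
      refine le_trans (le_of_eq h2) ?_
      simp
      linarith
  have := hanti ⟨h0, h1⟩ ⟨zero_le_one, le_rfl⟩ h1
  simp at this
  linarith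

lemma aux_log_hi {r : ℝ} (h1 : 1 ≤ r) :
    (r - 1) ^ 2 ≤ r * (2 * InformationTheory.klFun r) := by
  unfold InformationTheory.klFun
  have hanti : AntitoneOn (fun x : ℝ => -2 * Real.log x + 4 * x - x ^ 2) (Set.Ioc 0 1) := by
    have hd : ∀ x : ℝ, 0 < x → HasDerivAt (fun x : ℝ => -2 * Real.log x + 4 * x - x ^ 2)
        (-2 * x⁻¹ + 4 * 1 - 2 * x) x := by
      intro x hx
      have := (((Real.hasDerivAt_log hx.ne').const_mul (-2)).add
        ((hasDerivAt_id x).const_mul 4)).sub (hasDerivAt_pow 2 x)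
      exact this.congr_deriv (by norm_num)
    apply antitoneOn_of_deriv_nonpos (convex_Ioc 0 1)
    · intro x hx
      exact (hd x hx.1).continuousAt.continuousWithinAt
    · intro x hx
      rw [interior_Ioc] at hx
      exact (hd x hx.1).differentiableAt.differentiableWithinAt
    · intro x hx
      rw [interior_Ioc] at hx
      rw [(hd x hx.1).deriv]
      have hx0 := hx.1
      have : -2 * x⁻¹ + 4 * 1 - 2 * x = -(2 * (1 - x) ^ 2 / x) := by
        field_simp; ring
      rw [this]
      have : 0 ≤ 2 * (1 - x) ^ 2 / x := by positivity
      linarith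
  have hr : 0 < r := by linarith
  have := hanti (a := r⁻¹) (b := 1) ⟨by positivity, inv_le_one_of_one_le₀ h1⟩
    ⟨zero_lt_one, le_rfl⟩ (inv_le_one_of_one_le₀ h1)
  simp only [Real.log_one, Real.log_inv] at this
  have h4 := mul_le_mul_of_nonneg_left this (sq_nonneg r)
  have h5 : r ^ 2 * (-2 * -Real.log r + 4 * r⁻¹ - r⁻¹ ^ 2) = 2 * r ^ 2 * Real.log r + 4 * r - 1 := by
    field_simp
  nlinarith

lemma aux_pt {r v c lam : ℝ} (hr : 0 ≤ r) (hlam : 0 < lam) :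
    c * v * |1 - r| ≤ lam * c ^ 2 / 2 * (v ^ 2 + r * v ^ 2) + lam⁻¹ * InformationTheory.klFun r := by
  have key : ∀ a b K w : ℝ, 0 ≤ w → a ^ 2 ≤ w * (2 * K) → 0 < w →
      c * v * a ≤ lam * c ^ 2 / 2 * (w * v ^ 2) + lam⁻¹ * K := by
    intro a b K w _ h hw
    have h1 : a ^ 2 / (2 * w) ≤ K := by
      rw [div_le_iff₀ (by positivity)]; linarith
    have h2 := mul_le_mul_of_nonneg_left h1 (inv_pos.2 hlam).le
    have h3 : lam * c ^ 2 / 2 * (w * v ^ 2) + lam⁻¹ * (a ^ 2 / (2 * w)) - c * v * a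
        = (lam * c * w * v - a) ^ 2 / (2 * lam * w) := by
      field_simp; ring
    have h4 : 0 ≤ (lam * c * w * v - a) ^ 2 / (2 * lam * w) := by positivity
    linarith
  have hp : 0 ≤ lam * c ^ 2 / 2 * v ^ 2 := by positivity
  rcases le_total r 1 with h | h
  · rw [abs_of_nonneg (by linarith)]
    have := key (1 - r) 0 _ 1 zero_le_one (by simpa using aux_log_lo hr h) one_pos
    nlinarith [mul_nonneg hp hr]
  · rw [abs_of_nonpos (by linarith)]
    have := key (-(1 - r)) 0 _ r hr (by simpa using aux_log_hi h) (by linarith)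
    nlinarith

lemma aux_pt_enn {f : ENNReal} (hf : f ≠ ⊤) {v c lam : ℝ} (hv : 0 ≤ v) (hc : 0 < c)
    (hlam : 0 < lam) :
    ENNReal.ofReal c * ((1 - f) * ENNReal.ofReal v + (f - 1) * ENNReal.ofReal v) ≤
      ENNReal.ofReal (lam * c ^ 2 / 2) * (ENNReal.ofReal (v ^ 2) + f * ENNReal.ofReal (v ^ 2))
        + ENNReal.ofReal lam⁻¹ * ENNReal.ofReal (InformationTheory.klFun f.toReal) := by
  obtain ⟨r, hr, rfl⟩ : ∃ r : ℝ, 0 ≤ r ∧ f = ENNReal.ofReal r :=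
    ⟨f.toReal, ENNReal.toReal_nonneg, (ENNReal.ofReal_toReal hf).symm⟩
  rw [ENNReal.toReal_ofReal hr, ← ENNReal.ofReal_one, ← ENNReal.ofReal_sub _ hr,
    ← ENNReal.ofReal_sub _ zero_le_one, ← add_mul]
  have hk := InformationTheory.klFun_nonneg hr
  have h1 : ENNReal.ofReal (1 - r) + ENNReal.ofReal (r - 1) = ENNReal.ofReal |1 - r| := by
    rcases le_total r 1 with h | h
    · rw [abs_of_nonneg (by linarith), ENNReal.ofReal_of_nonpos (p := r - 1) (by linarith), add_zero]
    · rw [abs_of_nonpos (by linarith), ENNReal.ofReal_of_nonpos (p := 1 - r) (by linarith), zero_add,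
        neg_sub]
  rw [h1, ← ENNReal.ofReal_mul (abs_nonneg _), ← ENNReal.ofReal_mul hc.le, ← ENNReal.ofReal_mul hr,
    ← ENNReal.ofReal_add (by positivity) (by positivity), ← ENNReal.ofReal_mul (by positivity),
    ← ENNReal.ofReal_mul (by positivity), ← ENNReal.ofReal_add (by positivity) (by positivity)]
  apply ENNReal.ofReal_le_ofReal
  have := aux_pt (v := v) (c := c) hr hlam
  linarith

lemma aux_coupling {E : Type*} [MeasurableSpace E] (γ α β : Measure E)
    [MeasureTheory.IsFiniteMeasure α] [MeasureTheory.IsFiniteMeasure β]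
    (hP : IsProbabilityMeasure (γ + α : Measure E)) (hm : α Set.univ = β Set.univ)
    (V : E → ℝ) (hVmeas : Measurable V) (hV0 : ∀ x, 0 ≤ V x) :
    ∃ pc : Measure (E × E), IsProbabilityMeasure pc ∧ pc.map Prod.fst = γ + α ∧
      pc.map Prod.snd = γ + β ∧
      ∫⁻ p, ENNReal.ofReal (dV V p.1 p.2) ∂pc ≤
        ∫⁻ x, ENNReal.ofReal (V x) ∂α + ∫⁻ x, ENNReal.ofReal (V x) ∂β := by
  have hdiag : Measurable (fun x : E => (x, x)) := by fun_prop
  set q : Measure (E × E) := (α Set.univ)⁻¹ • α.prod β with hq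
  have hq1 : q.map Prod.fst = α := by
    rw [hq, Measure.map_smul, Measure.map_fst_prod, ← hm, smul_smul]
    by_cases h : α Set.univ = 0
    · rw [Measure.measure_univ_eq_zero.1 h]; simp
    · rw [ENNReal.inv_mul_cancel h (measure_ne_top _ _), one_smul]
  have hq2 : q.map Prod.snd = β := by
    rw [hq, Measure.map_smul, Measure.map_snd_prod, smul_smul]
    by_cases h : α Set.univ = 0
    · rw [Measure.measure_univ_eq_zero.1 (hm ▸ h : β Set.univ = 0)]; simp
    · rw [ENNReal.inv_mul_cancel h (measure_ne_top _ _), one_smul]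
  have hfst : (γ.map (fun x : E => (x, x)) + q).map Prod.fst = γ + α := by
    rw [Measure.map_add _ _ measurable_fst, hq1, Measure.map_map measurable_fst hdiag]
    congr 1
    exact Measure.map_id
  have hsnd : (γ.map (fun x : E => (x, x)) + q).map Prod.snd = γ + β := by
    rw [Measure.map_add _ _ measurable_snd, hq2, Measure.map_map measurable_snd hdiag]
    congr 1
    exact Measure.map_id
  refine ⟨γ.map (fun x => (x, x)) + q, ?_, hfst, hsnd, ?_⟩
  · constructor
    have h := measure_univ (μ := γ + α)
    rw [← hfst, Measure.map_apply measurable_fst MeasurableSet.univ] at h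
    simpa using h
  · rw [lintegral_add_measure]
    have h1 : ∫⁻ p, ENNReal.ofReal (dV V p.1 p.2) ∂(γ.map (fun x : E => (x, x))) = 0 := by
      apply le_antisymm _ zero_le
      refine (lintegral_map_le _ _).trans ?_
      simp [dV]
    rw [h1, zero_add]
    conv_rhs => rw [← hq1, ← hq2]
    rw [lintegral_map (by fun_prop) measurable_fst]
    rw [lintegral_map (by fun_prop) measurable_snd, ← lintegral_add_left (by fun_prop)]
    apply lintegral_mono
    intro p
    simp only
    rw [← ENNReal.ofReal_add (hV0 _) (hV0 _)]
    apply ENNReal.ofReal_le_ofReal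
    unfold dV
    split_ifs
    · exact add_nonneg (hV0 _) (hV0 _)
    · exact le_rfl


/-- One-step transportation-cost estimate of the paper (via Cauchy–Schwarz, Young and
the improved Marton coupling inequality): for probability measures `μ, ν` with
`∫ V² dμ, ∫ V² dν < ∞` and all `c, λ > 0`,
`c W_{1,d_V}(μ, ν) ≤ (λ c²/2)(∫ V² dμ + ∫ V² dν) + λ⁻¹ KL(ν, μ)`,
where `W_{1,d_V}(μ,ν)` is the infimum of `E_π[d_V(X,Y)]` over couplings `π`. -/
theorem one_step_transport_estimate
    {E : Type*} [MeasurableSpace E]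
    (μ ν : Measure E) [IsProbabilityMeasure μ] [IsProbabilityMeasure ν]
    (V : E → ℝ) (hVmeas : Measurable V) (hV1 : ∀ x, 1 ≤ V x)
    (hV2μ : Integrable (fun x => (V x) ^ 2) μ)
    (hV2ν : Integrable (fun x => (V x) ^ 2) ν)
    (c lam : ℝ) (hc : 0 < c) (hlam : 0 < lam) :
    ENNReal.ofReal c *
        (⨅ (pc : Measure (E × E)) (_ : IsProbabilityMeasure pc)
            (_ : pc.map Prod.fst = μ) (_ : pc.map Prod.snd = ν),
          ∫⁻ p, ENNReal.ofReal (dV V p.1 p.2) ∂pc)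
      ≤ ENNReal.ofReal (lam * c ^ 2 / 2 *
            ((∫ x, (V x) ^ 2 ∂μ) + ∫ x, (V x) ^ 2 ∂ν))
        + ENNReal.ofReal lam⁻¹ * klDiv ν μ := by
  by_cases hkl : ν ≪ μ ∧ Integrable (llr ν μ) ν
  swap
  · have : ENNReal.ofReal lam⁻¹ * klDiv ν μ = ⊤ := by
      rw [klDiv, if_neg hkl, ENNReal.mul_top]
      simpa using hlam
    rw [this]; simp
  obtain ⟨hac, hint⟩ := hkl
  have hV0 : ∀ x, 0 ≤ V x := fun x => zero_le_one.trans (hV1 x)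
  have hklm : klDiv ν μ = ∫⁻ x, ENNReal.ofReal (InformationTheory.klFun (ν.rnDeriv μ x).toReal) ∂μ := by
    rw [← InformationTheory.klDiv_eq_lintegral_klFun_of_ac hac, klDiv, if_pos ⟨hac, hint⟩,
      InformationTheory.klDiv_of_ac_of_integrable hac hint]
    simp
  set f := ν.rnDeriv μ with hf
  have hfm : Measurable f := Measure.measurable_rnDeriv _ _
  have hν : μ.withDensity f = ν := Measure.withDensity_rnDeriv_eq _ _ hac
  set γ := μ.withDensity (fun x => min (f x) 1) with hγ
  set α := μ.withDensity (fun x => 1 - f x) with hα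
  set β := μ.withDensity (fun x => f x - 1) with hβ
  have hγα : γ + α = μ := by
    rw [hγ, hα, ← withDensity_add_left (by fun_prop)]
    conv_rhs => rw [← withDensity_one (μ := μ)]
    congr 1
    ext x
    simp only [Pi.add_apply, Pi.one_apply]
    rcases le_total (f x) 1 with h | h
    · rw [min_eq_left h, add_tsub_cancel_of_le h]
    · rw [min_eq_right h, tsub_eq_zero_of_le h, add_zero]
  have hγβ : γ + β = ν := by
    rw [hγ, hβ, ← withDensity_add_left (by fun_prop)]
    conv_rhs => rw [← hν]
    congr 1
    ext x
    simp only [Pi.add_apply]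
    rcases le_total (f x) 1 with h | h
    · rw [min_eq_left h, tsub_eq_zero_of_le h, add_zero]
    · rw [min_eq_right h, add_tsub_cancel_of_le h]
  have hγμ : γ ≤ μ := by rw [← hγα]; exact Measure.le_add_right le_rfl
  have hαμ : α ≤ μ := by rw [← hγα]; exact Measure.le_add_left le_rfl
  have hβν : β ≤ ν := by rw [← hγβ]; exact Measure.le_add_left le_rfl
  have : IsFiniteMeasure γ := isFiniteMeasure_of_le μ hγμ
  have : IsFiniteMeasure α := isFiniteMeasure_of_le μ hαμ
  have : IsFiniteMeasure β := isFiniteMeasure_of_le ν hβν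
  have hP : IsProbabilityMeasure (γ + α) := by rw [hγα]; infer_instance
  have hm : α Set.univ = β Set.univ := by
    have h1 : γ Set.univ + α Set.univ = γ Set.univ + β Set.univ := by
      rw [← Measure.add_apply, ← Measure.add_apply, hγα, hγβ, measure_univ, measure_univ]
    exact (ENNReal.add_right_inj (measure_ne_top _ _)).1 h1
  obtain ⟨pc, hpc, h1, h2, h3⟩ := aux_coupling γ α β hP hm V hVmeas hV0
  rw [hγα] at h1
  rw [hγβ] at h2
  refine (mul_le_mul_right (iInf_le_of_le pc (iInf_le_of_le hpc
    (iInf_le_of_le h1 (iInf_le_of_le h2 h3)))) _).trans ?_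
  rw [hklm]
  have e1 : ENNReal.ofReal (lam * c ^ 2 / 2 * ((∫ x, (V x) ^ 2 ∂μ) + ∫ x, (V x) ^ 2 ∂ν)) =
      ENNReal.ofReal (lam * c ^ 2 / 2) * (∫⁻ x, ENNReal.ofReal (V x ^ 2) ∂μ
        + ∫⁻ x, f x * ENNReal.ofReal (V x ^ 2) ∂μ) := by
    rw [ENNReal.ofReal_mul (by positivity), ENNReal.ofReal_add
      (integral_nonneg fun x => sq_nonneg _) (integral_nonneg fun x => sq_nonneg _),
      ofReal_integral_eq_lintegral_ofReal hV2μ (ae_of_all _ fun x => sq_nonneg _),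
      ofReal_integral_eq_lintegral_ofReal hV2ν (ae_of_all _ fun x => sq_nonneg _)]
    congr 2
    conv_lhs => rw [← hν]
    rw [lintegral_withDensity_eq_lintegral_mul _ hfm (by fun_prop)]
    rfl
  rw [e1, hα, hβ, lintegral_withDensity_eq_lintegral_mul _ (by fun_prop) (by fun_prop),
    lintegral_withDensity_eq_lintegral_mul _ (by fun_prop) (by fun_prop),
    ← lintegral_add_left (by fun_prop), ← lintegral_add_left (by fun_prop),
    ← lintegral_const_mul' _ _ ENNReal.ofReal_ne_top,
    ← lintegral_const_mul' _ _ ENNReal.ofReal_ne_top,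
    ← lintegral_const_mul' _ _ ENNReal.ofReal_ne_top,
    ← lintegral_add_left (by fun_prop)]
  apply lintegral_mono_ae
  filter_upwards [Measure.rnDeriv_ne_top ν μ] with x hx
  exact aux_pt_enn hx (hV0 x) hc hlam
end

section
/- Let Z be a real random variable whose distribution is symmetric (Z and −Z have the same law) and let c ≤ 0. Then for every x ∈ ℝ, E[ ( e^{c(|x+Z| − |x|)} − 1 ) · 1_{|x+Z| > |x|} ] ≤ ( E[e^{c|Z|}] − 1 )/2. -/
open MeasureTheory ProbabilityTheory ENNReal
open scoped Classical

/-- The elementary symmetry estimate in the verification of the drift condition for the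
Random Walk Metropolis chain: if the law of `Z` is symmetric and `c ≤ 0`, then for every
`x`, `E[(e^{c(|x+Z|−|x|)} − 1) 1_{|x+Z| > |x|}] ≤ (E[e^{c|Z|}] − 1)/2`. -/
theorem symmetric_tail_estimate
    (μ : Measure ℝ) [IsProbabilityMeasure μ]
    (hsymm : μ.map (fun z => -z) = μ)
    (c : ℝ) (hc : c ≤ 0) (x : ℝ) :
    ∫ z, (if |x| < |x + z| then Real.exp (c * (|x + z| - |x|)) - 1 else 0) ∂μ
      ≤ ((∫ z, Real.exp (c * |z|) ∂μ) - 1) / 2 := by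
  set f : ℝ → ℝ := fun z => if |x| < |x + z| then Real.exp (c * (|x + z| - |x|)) - 1 else 0 with hf
  have hle : ∀ z, f z ≤ 0 := by
    intro z
    simp only [hf]
    split_ifs with h
    · have : Real.exp (c * (|x + z| - |x|)) ≤ 1 :=
        Real.exp_le_one_iff.2 (mul_nonpos_of_nonpos_of_nonneg hc (by linarith))
      linarith
    · exact le_rfl
  have hge : ∀ z, -1 ≤ f z := by
    intro z
    simp only [hf]
    split_ifs with h
    · have := Real.exp_pos (c * (|x + z| - |x|))
      linarith
    · norm_num
  have hm : Measurable f := by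
    apply Measurable.ite
    · exact measurableSet_lt (by fun_prop) (by fun_prop)
    · fun_prop
    · fun_prop
  have hi : Integrable f μ := by
    refine Integrable.of_bound hm.aestronglyMeasurable 1 (Filter.Eventually.of_forall fun z => ?_)
    rw [Real.norm_eq_abs, abs_le]
    exact ⟨hge z, by linarith [hle z]⟩
  have hi2 : Integrable (fun z => f (-z)) μ := by
    refine Integrable.of_bound (hm.comp measurable_neg).aestronglyMeasurable 1
      (Filter.Eventually.of_forall fun z => ?_)
    rw [Real.norm_eq_abs, abs_le]
    exact ⟨hge (-z), by linarith [hle (-z)]⟩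
  have hie : Integrable (fun z => Real.exp (c * |z|)) μ := by
    refine Integrable.of_bound (Measurable.aestronglyMeasurable (by fun_prop)) 1
      (Filter.Eventually.of_forall fun z => ?_)
    rw [Real.norm_eq_abs, abs_of_pos (Real.exp_pos _)]
    exact Real.exp_le_one_iff.2 (mul_nonpos_of_nonpos_of_nonneg hc (abs_nonneg z))
  have key : ∀ z, |x + z| = |x| + |z| → f z = Real.exp (c * |z|) - 1 := by
    intro z h
    simp only [hf]
    rw [h]
    split_ifs with h2
    · simp
    · have : |z| = 0 := le_antisymm (by linarith) (abs_nonneg z)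
      simp [this]
  have hpt : ∀ z, f z + f (-z) ≤ Real.exp (c * |z|) - 1 := by
    intro z
    have : |x + z| = |x| + |z| ∨ |x + -z| = |x| + |-z| := by
      rw [abs_add_eq_add_abs_iff, abs_add_eq_add_abs_iff]
      rcases le_total 0 x with h | h <;> rcases le_total 0 z with h' | h' <;> simp [h, h']
    rcases this with h | h
    · linarith [key z h, hle (-z)]
    · have := key (-z) h
      rw [abs_neg] at this
      linarith [hle z]
  have hs : ∫ z, f (-z) ∂μ = ∫ z, f z ∂μ := by
    conv_rhs => rw [← hsymm]
    rw [integral_map measurable_neg.aemeasurable hm.aestronglyMeasurable]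
  have h1 := integral_mono (hi.add hi2) (hie.sub (integrable_const (1 : ℝ))) hpt
  simp only [Pi.add_apply, Pi.sub_apply] at h1
  rw [integral_add hi hi2, integral_sub hie (integrable_const _), hs] at h1
  simp at h1
  linarith
end
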